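/- (Tractor form of the metrisability obstruction) Suppose the torsion-free connection ∇ on U (with parallel volume ε^{bc} and Schouten tensor P_{ab}) is projectively equivalent to a Levi–Civita connection on U. Define P_a := 5Y_a, Q_{ab} := 12Z_{ab}, R_c := 5Y_c, S_{ca} := 5∇_aY_c + 2Z_{ac}, T_{cab} := 5∇_{(a}∇_{b)}Y_c + 4∇_{(a}Z_{b)c} − 5P_{ab}Y_c − 15P_{c(a}Y_{b)}, U_{cd} := Z_{cd}, V_{cda} := ∇_aZ_{cd} − 5P_{a(c}Y_{d)}, and X_{cdab} := ∇_{(a}∇_{b)}Z_{cd} − 5(∇_{(a}P_{b)(c})Y_{d)} − 5P_{c(a}∇_{b)}Y_d − 5P_{d(a}∇_{b)}Y_c − P_{c(a}Z_{b)d} − P_{d(a}Z_{b)c} + 10Y_{(a}Y_{b)(cd)}. Then the determinant D(Γ) of the 6×6 matrix whose first row is (0, P₁, P₂, Q₁₁, Q₁₂, Q₂₂), whose rows 2–3 are (R_c, S_{c1}, S_{c2}, T_{c11}, T_{c12}, T_{c22}) for c = 1, 2, and whose rows 4–6 are (U_{cd}, V_{cd1}, V_{cd2}, X_{cd11}, X_{cd12},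 X_{cd22}) for (c,d) = (1,1), (1,2), (2,2), vanishes identically on U. -/

import Mathlib

/-!
Let `Γ + δω + δω` be the Levi–Civita connection of `g`. With the parallel volume `ε` one rescales
the inverse metric to a symmetric nondegenerate `σ = ν g⁻¹` that solves the metrisability equation
`∇_a σ^{bc} = δ_a^b μ^c + δ_a^c μ^b` for a vector field `μ` (`exists_metrSol`). This overdetermined
linear equation is prolonged by commuting partial derivatives:

* of `σ`, giving a function `ρ` with `∇_a μ^b = δ_a^b ρ - P_{ac} σ^{bc}` (`exists_prolSol`);
* of `μ`, giving `∇_a ρ = -2 P_{ac} μ^c + 2 Y_{acd} σ^{cd}` (`ProlSol.pd_ρ`), so that the system for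
  `(σ, μ, ρ)` is closed;
* of `ρ`, giving the algebraic constraint `5 Y_c μ^c + Z_{cd} σ^{cd} = 0` (`ProlSol.constraint`).

The constraint, its covariant derivative and its symmetrised second covariant derivative, with all
derivatives of `σ`, `μ`, `ρ` eliminated through the closed system, are six linear equations in the
six numbers `(ρ, μ⁰, μ¹, σ⁰⁰, σ⁰¹, σ¹¹)` (`ProlSol.constraint_pd`, `ProlSol.constraint_pd_pd`).
Their coefficients are the columns of the tractor matrix, so
`(ρ, μ⁰, μ¹, σ⁰⁰, 2σ⁰¹, σ¹¹)` is a left null vector. It is nonzero because `det σ ≠ 0`, hence the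
determinant vanishes.
-/

noncomputable section

open Matrix

/-- Partial derivative in the first (x) variable. -/
def pdx (f : ℝ × ℝ → ℝ) : ℝ × ℝ → ℝ :=
  fun p => deriv (fun t => f (t, p.2)) p.1

/-- Partial derivative in the second (y) variable. -/
def pdy (f : ℝ × ℝ → ℝ) : ℝ × ℝ → ℝ :=
  fun p => deriv (fun t => f (p.1, t)) p.2

/-- `pd 0 = ∂ₓ`, `pd 1 = ∂_y`. -/
def pd : Fin 2 → (ℝ × ℝ → ℝ) → (ℝ × ℝ → ℝ) := ![pdx, pdy]

/-- Covariant derivative `∇_a Y_c` of a one-form. -/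
def covD1 (Γ : Fin 2 → Fin 2 → Fin 2 → ℝ × ℝ → ℝ) (Y : Fin 2 → ℝ × ℝ → ℝ) :
    Fin 2 → Fin 2 → ℝ × ℝ → ℝ := fun a c q =>
  pd a (Y c) q - ∑ e : Fin 2, Γ e a c q * Y e q

/-- Covariant derivative `∇_a P_{bc}` of a covariant 2-tensor. -/
def covD2 (Γ : Fin 2 → Fin 2 → Fin 2 → ℝ × ℝ → ℝ) (P : Fin 2 → Fin 2 → ℝ × ℝ → ℝ) :
    Fin 2 → Fin 2 → Fin 2 → ℝ × ℝ → ℝ := fun a b c q =>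
  pd a (P b c) q - ∑ e : Fin 2, Γ e a b q * P e c q - ∑ e : Fin 2, Γ e a c q * P b e q

/-- Covariant derivative `∇_a T_{bcd}` of a covariant 3-tensor. -/
def covD3 (Γ : Fin 2 → Fin 2 → Fin 2 → ℝ × ℝ → ℝ)
    (T : Fin 2 → Fin 2 → Fin 2 → ℝ × ℝ → ℝ) :
    Fin 2 → Fin 2 → Fin 2 → Fin 2 → ℝ × ℝ → ℝ := fun a b c d q =>
  pd a (T b c d) q - ∑ e : Fin 2, Γ e a b q * T e c d q
    - ∑ e : Fin 2, Γ e a c q * T b e d q - ∑ e : Fin 2, Γ e a d q * T b c e q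

/-- Curvature `Rᶜ_{abd}` of the torsion-free connection with symbols `Γᶜ_{ab}`. -/
def Rcurv (Γ : Fin 2 → Fin 2 → Fin 2 → ℝ × ℝ → ℝ) :
    Fin 2 → Fin 2 → Fin 2 → Fin 2 → ℝ × ℝ → ℝ := fun c a b d q =>
  pd a (Γ c b d) q - pd b (Γ c a d) q
    + ∑ e : Fin 2, Γ c a e q * Γ e b d q - ∑ e : Fin 2, Γ c b e q * Γ e a d q

/-- The metric `g = E dx² + 2F dx dy + G dy²` as a matrix. -/
def gmat (E F G : ℝ × ℝ → ℝ) : ℝ × ℝ → Matrix (Fin 2) (Fin 2) ℝ := fun q =>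
  !![E q, F q; F q, G q]

/-- Christoffel symbols `Γᶜ_{ab}` of the Levi–Civita connection of `g`. -/
def Christoffel (E F G : ℝ × ℝ → ℝ) (c a b : Fin 2) : ℝ × ℝ → ℝ := fun q =>
  (1/2) * ∑ d : Fin 2, ((gmat E F G q)⁻¹ c d) *
    (pd a (fun r => gmat E F G r b d) q + pd b (fun r => gmat E F G r a d) q
      - pd d (fun r => gmat E F G r a b) q)

/-- `∇` (with symbols `Γ`) is projectively equivalent to a Levi–Civita connection on `U`:
there are a one-form `ω` and a nondegenerate metric `g` with
`Γᶜ_{ab} + δᶜ_aω_b + δᶜ_bω_a` the Christoffel symbols of `g`. -/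
def ProjEquivLeviCivita (U : Set (ℝ × ℝ)) (Γ : Fin 2 → Fin 2 → Fin 2 → ℝ × ℝ → ℝ) : Prop :=
  ∃ ω : Fin 2 → ℝ × ℝ → ℝ, (∀ a, ContDiffOn ℝ (⊤ : ℕ∞) (ω a) U) ∧
    ∃ E F G : ℝ × ℝ → ℝ,
      ContDiffOn ℝ (⊤ : ℕ∞) E U ∧ ContDiffOn ℝ (⊤ : ℕ∞) F U ∧ ContDiffOn ℝ (⊤ : ℕ∞) G U ∧
      (∀ q ∈ U, E q * G q - (F q) ^ 2 ≠ 0) ∧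
      ∀ c a b : Fin 2, ∀ q ∈ U,
        Γ c a b q + (if c = a then ω b q else 0) + (if c = b then ω a q else 0)
          = Christoffel E F G c a b q

end

noncomputable section

variable (Γ : Fin 2 → Fin 2 → Fin 2 → ℝ × ℝ → ℝ)
variable (ε P : Fin 2 → Fin 2 → ℝ × ℝ → ℝ)

/-- `Y_c := ε^{ab}∇_aP_{bc}`. -/
def Yform : Fin 2 → ℝ × ℝ → ℝ := fun c q =>
  ∑ a : Fin 2, ∑ b : Fin 2, ε a b q * covD2 Γ P a b c q

/-- `Y_{abc} := (1/2)(∇_aP_{bc} − ∇_bP_{ac})`, the Cotton tensor. -/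
def Ytens : Fin 2 → Fin 2 → Fin 2 → ℝ × ℝ → ℝ := fun a b c q =>
  (1/2) * (covD2 Γ P a b c q - covD2 Γ P b a c q)

/-- `Z_{ab} := ∇_{(a}Y_{b)}`. -/
def Ztens : Fin 2 → Fin 2 → ℝ × ℝ → ℝ := fun a b q =>
  (1/2) * (covD1 Γ (Yform Γ ε P) a b q + covD1 Γ (Yform Γ ε P) b a q)

/-- `∇_aY_c`. -/
def DY : Fin 2 → Fin 2 → ℝ × ℝ → ℝ := covD1 Γ (Yform Γ ε P)

/-- `∇_a∇_bY_c`. -/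
def DDY : Fin 2 → Fin 2 → Fin 2 → ℝ × ℝ → ℝ := covD2 Γ (DY Γ ε P)

/-- `∇_aZ_{cd}`. -/
def DZ : Fin 2 → Fin 2 → Fin 2 → ℝ × ℝ → ℝ := covD2 Γ (Ztens Γ ε P)

/-- `∇_a∇_bZ_{cd}`. -/
def DDZ : Fin 2 → Fin 2 → Fin 2 → Fin 2 → ℝ × ℝ → ℝ := covD3 Γ (DZ Γ ε P)

/-- `S_{ca} := 5∇_aY_c + 2Z_{ac}`. -/
def Stens : Fin 2 → Fin 2 → ℝ × ℝ → ℝ := fun c a q =>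
  5 * DY Γ ε P a c q + 2 * Ztens Γ ε P a c q

/-- `T_{cab} := 5∇_{(a}∇_{b)}Y_c + 4∇_{(a}Z_{b)c} − 5P_{ab}Y_c − 15P_{c(a}Y_{b)}`. -/
def Ttens : Fin 2 → Fin 2 → Fin 2 → ℝ × ℝ → ℝ := fun c a b q =>
  (5/2) * (DDY Γ ε P a b c q + DDY Γ ε P b a c q)
    + 2 * (DZ Γ ε P a b c q + DZ Γ ε P b a c q)
    - 5 * P a b q * Yform Γ ε P c q
    - (15/2) * (P c a q * Yform Γ ε P b q + P c b q * Yform Γ ε P a q)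

/-- `V_{cda} := ∇_aZ_{cd} − 5P_{a(c}Y_{d)}`. -/
def Vtens : Fin 2 → Fin 2 → Fin 2 → ℝ × ℝ → ℝ := fun c d a q =>
  DZ Γ ε P a c d q
    - (5/2) * (P a c q * Yform Γ ε P d q + P a d q * Yform Γ ε P c q)

/-- `X_{cdab}` as in the statement. -/
def Xtens : Fin 2 → Fin 2 → Fin 2 → Fin 2 → ℝ × ℝ → ℝ := fun c d a b q =>
  (1/2) * (DDZ Γ ε P a b c d q + DDZ Γ ε P b a c d q)
    - (5/4) * ((covD2 Γ P a b c q + covD2 Γ P b a c q) * Yform Γ ε P d q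
        + (covD2 Γ P a b d q + covD2 Γ P b a d q) * Yform Γ ε P c q)
    - (5/2) * (P c a q * DY Γ ε P b d q + P c b q * DY Γ ε P a d q)
    - (5/2) * (P d a q * DY Γ ε P b c q + P d b q * DY Γ ε P a c q)
    - (1/2) * (P c a q * Ztens Γ ε P b d q + P c b q * Ztens Γ ε P a d q)
    - (1/2) * (P d a q * Ztens Γ ε P b c q + P d b q * Ztens Γ ε P a c q)
    + 5 * (Yform Γ ε P a q * ((1/2) * (Ytens Γ P b c d q + Ytens Γ P b d c q))
        + Yform Γ ε P b q * ((1/2) * (Ytens Γ P a c d q + Ytens Γ P a d c q)))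

/-- The tractor obstruction matrix. -/
def TractorMat : ℝ × ℝ → Matrix (Fin 6) (Fin 6) ℝ := fun q =>
  Matrix.of
  ![![0, 5 * Yform Γ ε P 0 q, 5 * Yform Γ ε P 1 q,
      12 * Ztens Γ ε P 0 0 q, 12 * Ztens Γ ε P 0 1 q, 12 * Ztens Γ ε P 1 1 q],
    ![5 * Yform Γ ε P 0 q, Stens Γ ε P 0 0 q, Stens Γ ε P 0 1 q,
      Ttens Γ ε P 0 0 0 q, Ttens Γ ε P 0 0 1 q, Ttens Γ ε P 0 1 1 q],
    ![5 * Yform Γ ε P 1 q, Stens Γ ε P 1 0 q, Stens Γ ε P 1 1 q,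
      Ttens Γ ε P 1 0 0 q, Ttens Γ ε P 1 0 1 q, Ttens Γ ε P 1 1 1 q],
    ![Ztens Γ ε P 0 0 q, Vtens Γ ε P 0 0 0 q, Vtens Γ ε P 0 0 1 q,
      Xtens Γ ε P 0 0 0 0 q, Xtens Γ ε P 0 0 0 1 q, Xtens Γ ε P 0 0 1 1 q],
    ![Ztens Γ ε P 0 1 q, Vtens Γ ε P 0 1 0 q, Vtens Γ ε P 0 1 1 q,
      Xtens Γ ε P 0 1 0 0 q, Xtens Γ ε P 0 1 0 1 q, Xtens Γ ε P 0 1 1 1 q],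
    ![Ztens Γ ε P 1 1 q, Vtens Γ ε P 1 1 0 q, Vtens Γ ε P 1 1 1 q,
      Xtens Γ ε P 1 1 0 0 q, Xtens Γ ε P 1 1 0 1 q, Xtens Γ ε P 1 1 1 1 q]]

end

/-! ### Calculus of the partial derivatives `pd` on an open set -/

lemma pd_eq_fderiv {f : ℝ × ℝ → ℝ} {q : ℝ × ℝ} (hf : DifferentiableAt ℝ f q) (a : Fin 2) :
    pd a f q = fderiv ℝ f q (![(1, 0), (0, 1)] a) := by
  have h0 : HasDerivAt (fun t : ℝ => (t, q.2)) ((1 : ℝ), (0 : ℝ)) q.1 :=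
    (hasDerivAt_id q.1).prodMk (hasDerivAt_const q.1 q.2)
  have h1 : HasDerivAt (fun t : ℝ => (q.1, t)) ((0 : ℝ), (1 : ℝ)) q.2 :=
    (hasDerivAt_const q.2 q.1).prodMk (hasDerivAt_id q.2)
  fin_cases a
  · exact (HasFDerivAt.comp_hasDerivAt (f := fun t : ℝ => (t, q.2)) q.1 hf.hasFDerivAt h0).deriv
  · exact (HasFDerivAt.comp_hasDerivAt (f := fun t : ℝ => (q.1, t)) q.2 hf.hasFDerivAt h1).deriv

lemma pd_add {f g : ℝ × ℝ → ℝ} {q : ℝ × ℝ} (a : Fin 2) (hf : DifferentiableAt ℝ f q)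
    (hg : DifferentiableAt ℝ g q) : pd a (fun p => f p + g p) q = pd a f q + pd a g q := by
  rw [pd_eq_fderiv hf, pd_eq_fderiv hg, pd_eq_fderiv (by fun_prop), fderiv_fun_add hf hg]; rfl

lemma pd_sub {f g : ℝ × ℝ → ℝ} {q : ℝ × ℝ} (a : Fin 2) (hf : DifferentiableAt ℝ f q)
    (hg : DifferentiableAt ℝ g q) : pd a (fun p => f p - g p) q = pd a f q - pd a g q := by
  rw [pd_eq_fderiv hf, pd_eq_fderiv hg, pd_eq_fderiv (by fun_prop), fderiv_fun_sub hf hg]; rfl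

lemma pd_mul {f g : ℝ × ℝ → ℝ} {q : ℝ × ℝ} (a : Fin 2) (hf : DifferentiableAt ℝ f q)
    (hg : DifferentiableAt ℝ g q) :
    pd a (fun p => f p * g p) q = pd a f q * g q + f q * pd a g q := by
  rw [pd_eq_fderiv hf, pd_eq_fderiv hg, pd_eq_fderiv (by fun_prop), fderiv_fun_mul hf hg]
  simp; ring

lemma pd_const (a : Fin 2) (c : ℝ) (q : ℝ × ℝ) : pd a (fun _ => c) q = 0 := by
  rw [pd_eq_fderiv (by fun_prop)]; simp

lemma pd_neg {f : ℝ × ℝ → ℝ} {q : ℝ × ℝ} (a : Fin 2) (hf : DifferentiableAt ℝ f q) :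
    pd a (fun p => -f p) q = -pd a f q := by
  rw [pd_eq_fderiv hf, pd_eq_fderiv (by fun_prop), fderiv_fun_neg]; rfl

lemma pd_comp {φ : ℝ → ℝ} {φ' : ℝ} {f : ℝ × ℝ → ℝ} {q : ℝ × ℝ} (a : Fin 2)
    (hφ : HasDerivAt φ φ' (f q)) (hf : DifferentiableAt ℝ f q) :
    pd a (fun p => φ (f p)) q = φ' * pd a f q := by
  have h := hφ.comp_hasFDerivAt q hf.hasFDerivAt
  change pd a (φ ∘ f) q = _
  rw [pd_eq_fderiv hf, pd_eq_fderiv h.differentiableAt, h.fderiv]; simp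

lemma pd_congr {U : Set (ℝ × ℝ)} (hU : IsOpen U) {f g : ℝ × ℝ → ℝ} (h : ∀ p ∈ U, f p = g p)
    (a : Fin 2) {q : ℝ × ℝ} (hq : q ∈ U)
    (hf : DifferentiableAt ℝ f q) : pd a f q = pd a g q := by
  have he : f =ᶠ[nhds q] g := Filter.eventually_of_mem (hU.mem_nhds hq) h
  rw [pd_eq_fderiv hf, pd_eq_fderiv (he.differentiableAt_iff.1 hf), he.fderiv_eq]

lemma ContDiffOn.diffAt_open {U : Set (ℝ × ℝ)} (hU : IsOpen U) {f : ℝ × ℝ → ℝ}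
    (hf : ContDiffOn ℝ (⊤ : ℕ∞) f U) {q : ℝ × ℝ} (hq : q ∈ U) : DifferentiableAt ℝ f q :=
  (hf.contDiffAt (hU.mem_nhds hq)).differentiableAt (by simp)

lemma ContDiffOn.pd {U : Set (ℝ × ℝ)} (hU : IsOpen U) {f : ℝ × ℝ → ℝ}
    (hf : ContDiffOn ℝ (⊤ : ℕ∞) f U) (a : Fin 2) :
    ContDiffOn ℝ (⊤ : ℕ∞) (_root_.pd a f) U := by
  have h : ContDiffOn ℝ (⊤ : ℕ∞) (fderiv ℝ f) U :=
    hf.fderiv_of_isOpen hU (by simp)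
  exact (h.clm_apply contDiffOn_const).congr fun q hq => pd_eq_fderiv (hf.diffAt_open hU hq) a

lemma pd_comm {U : Set (ℝ × ℝ)} (hU : IsOpen U) {f : ℝ × ℝ → ℝ}
    (hf : ContDiffOn ℝ (⊤ : ℕ∞) f U) {q : ℝ × ℝ} (hq : q ∈ U) : pd 0 (pd 1 f) q = pd 1 (pd 0 f) q := by
  have h : ContDiffOn ℝ (⊤ : ℕ∞) (fderiv ℝ f) U :=
    hf.fderiv_of_isOpen hU (by simp)
  have hd : DifferentiableAt ℝ (fderiv ℝ f) q :=
    (h.contDiffAt (hU.mem_nhds hq)).differentiableAt (by simp)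
  have key : ∀ a b : Fin 2, pd a (pd b f) q
      = fderiv ℝ (fderiv ℝ f) q (![(1, 0), (0, 1)] a) (![(1, 0), (0, 1)] b) := by
    intro a b
    rw [pd_congr hU (fun p hp => pd_eq_fderiv (hf.diffAt_open hU hp) b) a hq
      ((hf.pd hU b).diffAt_open hU hq), pd_eq_fderiv (by fun_prop),
      fderiv_clm_apply hd (by fun_prop)]
    simp
  have hs : IsSymmSndFDerivAt ℝ f q :=
    (hf.contDiffAt (hU.mem_nhds hq)).isSymmSndFDerivAt
      (by simpa using WithTop.coe_le_coe.2 (le_top : (2 : ℕ∞) ≤ ⊤))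
  rw [key, key]
  exact hs _ _

/-- Equality of mixed partial derivatives, for a function whose first derivatives are only
known on `U` through the formulas `g₀`, `g₁`. -/
lemma pd_cross {U : Set (ℝ × ℝ)} (hU : IsOpen U) {f g₀ g₁ : ℝ × ℝ → ℝ}
    (hf : ContDiffOn ℝ (⊤ : ℕ∞) f U)
    (h₀ : ∀ p ∈ U, pd 0 f p = g₀ p) (h₁ : ∀ p ∈ U, pd 1 f p = g₁ p)
    {q : ℝ × ℝ} (hq : q ∈ U) : pd 1 g₀ q = pd 0 g₁ q := by
  rw [← pd_congr hU h₀ 1 hq ((hf.pd hU 0).diffAt_open hU hq),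
    ← pd_congr hU h₁ 0 hq ((hf.pd hU 1).diffAt_open hU hq), pd_comm hU hf hq]

/-! ### The metrisability equation -/

/-- The standing hypotheses on the connection: `Γ` is symmetric, `ε` is a parallel volume and
`P` is the symmetric Schouten tensor. -/
structure Geo (U : Set (ℝ × ℝ)) (Γ : Fin 2 → Fin 2 → Fin 2 → ℝ × ℝ → ℝ)
    (ε P : Fin 2 → Fin 2 → ℝ × ℝ → ℝ) : Prop where
  hU : IsOpen U
  Γsym : ∀ c a b, Γ c a b = Γ c b a
  Γsm : ∀ c a b, ContDiffOn ℝ (⊤ : ℕ∞) (Γ c a b) U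
  εskew : ∀ a b q, ε a b q = -ε b a q
  εne : ∀ q ∈ U, ε 0 1 q ≠ 0
  εsm : ∀ a b, ContDiffOn ℝ (⊤ : ℕ∞) (ε a b) U
  εpar : ∀ a b c : Fin 2, ∀ q ∈ U,
      pd a (ε b c) q + (∑ e : Fin 2, Γ b a e q * ε e c q)
        + (∑ e : Fin 2, Γ c a e q * ε b e q) = 0
  Psym : ∀ a b, P a b = P b a
  Psm : ∀ a b, ContDiffOn ℝ (⊤ : ℕ∞) (P a b) U
  Schouten : ∀ c a b d : Fin 2, ∀ q ∈ U,
      Rcurv Γ c a b d q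
        = (if c = a then P b d q else 0) - (if c = b then P a d q else 0)

/-- A solution of the metrisability equation
`∇_a σ^{bc} = δ_a^b μ^c + δ_a^c μ^b` with `σ` symmetric. -/
structure MetrSol (U : Set (ℝ × ℝ)) (Γ : Fin 2 → Fin 2 → Fin 2 → ℝ × ℝ → ℝ)
    (σ : Fin 2 → Fin 2 → ℝ × ℝ → ℝ) (μ : Fin 2 → ℝ × ℝ → ℝ) : Prop where
  σsm : ∀ a b, ContDiffOn ℝ (⊤ : ℕ∞) (σ a b) U
  μsm : ∀ a, ContDiffOn ℝ (⊤ : ℕ∞) (μ a) U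
  σsym : ∀ a b, σ a b = σ b a
  eq : ∀ a b c : Fin 2, ∀ q ∈ U,
    pd a (σ b c) q + (∑ e : Fin 2, Γ b a e q * σ e c q) + (∑ e : Fin 2, Γ c a e q * σ b e q)
      = (if a = b then μ c q else 0) + (if a = c then μ b q else 0)

section Prolongation

variable {U : Set (ℝ × ℝ)} {Γ : Fin 2 → Fin 2 → Fin 2 → ℝ × ℝ → ℝ}
  {ε P σ : Fin 2 → Fin 2 → ℝ × ℝ → ℝ} {μ : Fin 2 → ℝ × ℝ → ℝ} {ρ : ℝ × ℝ → ℝ}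

/-- The volume is parallel, so `∂_a ε⁰¹ = -Γᶜ_{ac} ε⁰¹`. -/
lemma Geo.pd_ε (h : Geo U Γ ε P) (a : Fin 2) {q : ℝ × ℝ} (hq : q ∈ U) :
    pd a (ε 0 1) q = -(Γ 0 a 0 q + Γ 1 a 1 q) * ε 0 1 q := by
  have h1 := h.εpar a 0 1 q hq
  have h00 : ε 0 0 q = 0 := by linarith [h.εskew 0 0 q]
  have h11 : ε 1 1 q = 0 := by linarith [h.εskew 1 1 q]
  simp only [Fin.sum_univ_two, h00, h11] at h1
  linear_combination h1

/-- The derivatives of `g` in terms of its Christoffel symbols: `∂_a g_{bc}` is the sum of the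
two lowered Christoffel symbols. -/
lemma christoffel_metric {E F G : ℝ × ℝ → ℝ} {q : ℝ × ℝ} (hΔ : E q * G q - F q ^ 2 ≠ 0)
    (a : Fin 2) :
    pd a E q = 2 * (E q * Christoffel E F G 0 a 0 q + F q * Christoffel E F G 1 a 0 q) ∧
    pd a F q = E q * Christoffel E F G 0 a 1 q + F q * Christoffel E F G 1 a 1 q
      + F q * Christoffel E F G 0 a 0 q + G q * Christoffel E F G 1 a 0 q ∧
    pd a G q = 2 * (F q * Christoffel E F G 0 a 1 q + G q * Christoffel E F G 1 a 1 q) := by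
  have hdet : (gmat E F G q).det = E q * G q - F q ^ 2 := by
    simp [gmat, Matrix.det_fin_two]; ring
  have hinv : (gmat E F G q)⁻¹ = (E q * G q - F q ^ 2)⁻¹ • !![G q, -F q; -F q, E q] := by
    rw [Matrix.inv_def, hdet, Ring.inverse_eq_inv']
    simp [gmat, Matrix.adjugate_fin_two]
  simp only [Christoffel, hinv, Fin.sum_univ_two]
  fin_cases a <;> simp [gmat] <;> refine ⟨?_, ?_, ?_⟩ <;> field_simp <;> ring

/-- If `Γ` is projectively equivalent to the Levi–Civita connection of `g`, then
`σ = ν g⁻¹` with `ν = (|det g| (ε⁰¹)²)^{1/3}` solves the metrisability equation: `ν` satisfies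
`∂_a ν = 2 ω_a ν`, by taking the trace of `Γᶜ_{ab} + δᶜ_aω_b + δᶜ_bω_a`. -/
lemma exists_metrSol (h : Geo U Γ ε P) (hmet : ProjEquivLeviCivita U Γ) :
    ∃ σ μ, MetrSol U Γ σ μ ∧ ∀ q ∈ U, σ 0 0 q * σ 1 1 q - σ 0 1 q ^ 2 ≠ 0 := by
  obtain ⟨ω, hω, E, F, G, hE, hF, hG, hΔ', hC⟩ := hmet
  have hΔ : ∀ q ∈ U, E q * G q - F q * F q ≠ 0 := fun q hq => by
    rw [← pow_two]; exact hΔ' q hq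
  have hU := h.hU
  -- `Real.log` is `log |·|`, so the sign of `det g` plays no role
  set δ : ℝ × ℝ → ℝ := fun p => (E p * G p - F p * F p) * (ε 0 1 p * ε 0 1 p) with hδ
  set ν : ℝ × ℝ → ℝ := fun p => Real.exp (1 / 3 * Real.log (δ p)) with hν
  have hε := h.εsm 0 1
  have hδne : ∀ p ∈ U, δ p ≠ 0 := fun p hp =>
    mul_ne_zero (hΔ p hp) (mul_ne_zero (h.εne p hp) (h.εne p hp))
  have hδsm : ContDiffOn ℝ (⊤ : ℕ∞) δ U := by simp only [hδ]; fun_prop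
  have hνsm : ContDiffOn ℝ (⊤ : ℕ∞) ν U := (contDiffOn_const.mul (hδsm.log hδne)).exp
  set Δi : ℝ × ℝ → ℝ := fun p => (E p * G p - F p * F p)⁻¹ with hΔi
  have hΔism : ContDiffOn ℝ (⊤ : ℕ∞) Δi U := ContDiffOn.inv (by fun_prop) hΔ
  set σ : Fin 2 → Fin 2 → ℝ × ℝ → ℝ :=
    ![![fun p => ν p * Δi p * G p, fun p => -(ν p * Δi p * F p)],
      ![fun p => -(ν p * Δi p * F p), fun p => ν p * Δi p * E p]] with hσ
  have hσsm : ∀ a b, ContDiffOn ℝ (⊤ : ℕ∞) (σ a b) U := by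
    intro a b
    fin_cases a <;> fin_cases b <;> simp [hσ] <;> fun_prop
  refine ⟨σ, fun c p => -(ω 0 p * σ 0 c p + ω 1 p * σ 1 c p), ⟨hσsm, ?_, ?_, ?_⟩, ?_⟩
  · intro c
    have h0 := hσsm 0 c
    have h1 := hσsm 1 c
    have := hω 0
    have := hω 1
    fun_prop
  · intro a b
    fin_cases a <;> fin_cases b <;> simp [hσ]
  · intro a b c q hq
    have dE := hE.diffAt_open hU hq
    have dF := hF.diffAt_open hU hq
    have dG := hG.diffAt_open hU hq
    have dε := hε.diffAt_open hU hq
    have dν := hνsm.diffAt_open hU hq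
    have dδ := hδsm.diffAt_open hU hq
    have dΔi := hΔism.diffAt_open hU hq
    have eE := fun a => (christoffel_metric (hΔ' q hq) a).1
    have eF := fun a => (christoffel_metric (hΔ' q hq) a).2.1
    have eG := fun a => (christoffel_metric (hΔ' q hq) a).2.2
    have eΔ : ∀ a, pd a (fun p => E p * G p - F p * F p) q
        = 2 * (Christoffel E F G 0 a 0 q + Christoffel E F G 1 a 1 q)
          * (E q * G q - F q * F q) := by
      intro a
      simp (disch := fun_prop) only [pd_mul, pd_sub, eE, eF, eG]
      ring
    have eδ : ∀ a, pd a δ q = 6 * ω a q * δ q := by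
      intro a
      have htr : Γ 0 a 0 q + Γ 1 a 1 q + 3 * ω a q
          = Christoffel E F G 0 a 0 q + Christoffel E F G 1 a 1 q := by
        have h0 := hC 0 a 0 q hq
        have h1 := hC 1 a 1 q hq
        fin_cases a <;> simp at h0 h1 ⊢ <;> linarith
      rw [pd_mul a (by fun_prop) (by fun_prop), eΔ, pd_mul a (by fun_prop) (by fun_prop),
        h.pd_ε a hq]
      linear_combination
        -2 * (E q * G q - F q * F q) * (ε 0 1 q * ε 0 1 q) * htr
    have eν : ∀ a, pd a ν q = 2 * ω a q * ν q := by
      intro a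
      rw [pd_comp (φ := fun x => Real.exp (1 / 3 * Real.log x)) a
        (((Real.hasDerivAt_log (hδne q hq)).const_mul (1 / 3)).exp) dδ, eδ]
      have := hδne q hq
      simp only [hν]
      field_simp; ring
    have eΔi : ∀ a, pd a Δi q
        = -2 * (Christoffel E F G 0 a 0 q + Christoffel E F G 1 a 1 q) * Δi q := by
      intro a
      rw [pd_comp (φ := fun x => x⁻¹) a (hasDerivAt_inv (hΔ q hq)) (by fun_prop), eΔ]
      have := hΔ q hq
      simp only [hΔi]
      generalize E q * G q - F q * F q = x at this ⊢
      field_simp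
    simp only [← hC _ _ _ q hq] at eE eF eG eΔi
    clear_value ν Δi
    have hs0 := congrFun (h.Γsym 0 1 0) q
    have hs1 := congrFun (h.Γsym 1 1 0) q
    fin_cases a <;> fin_cases b <;> fin_cases c <;>
    · simp (disch := fun_prop) [hσ, pd_mul, pd_neg, eν, eΔi, eE, eF, eG, Fin.sum_univ_two,
        hs0, hs1]
      ring
  · intro q hq
    have h1 : σ 0 0 q * σ 1 1 q - σ 0 1 q ^ 2 = ν q ^ 2 * Δi q ^ 2 * (E q * G q - F q * F q) := by
      simp [hσ]; ring
    rw [h1]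
    exact mul_ne_zero (mul_ne_zero (pow_ne_zero _ (Real.exp_ne_zero _))
      (pow_ne_zero _ (inv_ne_zero (hΔ q hq)))) (hΔ q hq)

/-! ### Prolongation of the metrisability equation -/

lemma Geo.diffΓ (h : Geo U Γ ε P) {q : ℝ × ℝ} (hq : q ∈ U) (c a b : Fin 2) :
    DifferentiableAt ℝ (Γ c a b) q := (h.Γsm c a b).diffAt_open h.hU hq

lemma Geo.diffP (h : Geo U Γ ε P) {q : ℝ × ℝ} (hq : q ∈ U) (a b : Fin 2) :
    DifferentiableAt ℝ (P a b) q := (h.Psm a b).diffAt_open h.hU hq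

lemma Geo.diffε (h : Geo U Γ ε P) {q : ℝ × ℝ} (hq : q ∈ U) (a b : Fin 2) :
    DifferentiableAt ℝ (ε a b) q := (h.εsm a b).diffAt_open h.hU hq

lemma MetrSol.diffσ (s : MetrSol U Γ σ μ) (hU : IsOpen U) {q : ℝ × ℝ} (hq : q ∈ U)
    (a b : Fin 2) : DifferentiableAt ℝ (σ a b) q := (s.σsm a b).diffAt_open hU hq

lemma MetrSol.diffμ (s : MetrSol U Γ σ μ) (hU : IsOpen U) {q : ℝ × ℝ} (hq : q ∈ U)
    (a : Fin 2) : DifferentiableAt ℝ (μ a) q := (s.μsm a).diffAt_open hU hq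

/-- The metrisability equation solved for the partial derivatives of `σ`. -/
lemma MetrSol.pd_σ (s : MetrSol U Γ σ μ) (a b c : Fin 2) {q : ℝ × ℝ} (hq : q ∈ U) :
    pd a (σ b c) q = (if a = b then μ c q else 0) + (if a = c then μ b q else 0)
      - (Γ b a 0 q * σ 0 c q + Γ b a 1 q * σ 1 c q)
      - (Γ c a 0 q * σ b 0 q + Γ c a 1 q * σ b 1 q) := by
  have := s.eq a b c q hq
  simp only [Fin.sum_univ_two] at this
  linear_combination this

/-- The Schouten condition solved for the derivative `∂₀ Γᶜ_{1d}`. -/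
lemma Geo.pd_Γ (h : Geo U Γ ε P) (c d : Fin 2) {q : ℝ × ℝ} (hq : q ∈ U) :
    pd 0 (Γ c 1 d) q = pd 1 (Γ c 0 d) q
      - (Γ c 0 0 q * Γ 0 1 d q + Γ c 0 1 q * Γ 1 1 d q)
      + (Γ c 1 0 q * Γ 0 0 d q + Γ c 1 1 q * Γ 1 0 d q)
      + (if c = 0 then P 1 d q else 0) - (if c = 1 then P 0 d q else 0) := by
  have := h.Schouten c 0 1 d q hq
  simp only [Rcurv, Fin.sum_univ_two] at this
  linear_combination this

/-- The prolonged system: a solution of the metrisability equation together with `ρ` satisfying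
`∇_a μ^b = δ_a^b ρ - P_{ac} σ^{bc}`. -/
structure ProlSol (U : Set (ℝ × ℝ)) (Γ : Fin 2 → Fin 2 → Fin 2 → ℝ × ℝ → ℝ)
    (P σ : Fin 2 → Fin 2 → ℝ × ℝ → ℝ) (μ : Fin 2 → ℝ × ℝ → ℝ) (ρ : ℝ × ℝ → ℝ) : Prop
    extends MetrSol U Γ σ μ where
  ρsm : ContDiffOn ℝ (⊤ : ℕ∞) ρ U
  pd_μ : ∀ a b : Fin 2, ∀ q ∈ U, pd a (μ b) q = (if a = b then ρ q else 0)
    - (P a 0 q * σ b 0 q + P a 1 q * σ b 1 q) - (Γ b a 0 q * μ 0 q + Γ b a 1 q * μ 1 q)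

/-- The mixed second derivatives of `σ` agree, which forces the trace-free part of
`∇_a μ^b + P_{ac} σ^{bc}` to vanish. -/
lemma exists_prolSol (h : Geo U Γ ε P) (s : MetrSol U Γ σ μ) :
    ∃ ρ, ProlSol U Γ P σ μ ρ := by
  have hU := h.hU
  have key : ∀ b c : Fin 2, ∀ q ∈ U, _ := fun b c q hq => pd_cross hU (s.σsm b c)
    (fun p hp => s.pd_σ 0 b c hp) (fun p hp => s.pd_σ 1 b c hp) hq
  refine ⟨fun q => pd 0 (μ 0) q + (P 0 0 q * σ 0 0 q + P 0 1 q * σ 0 1 q)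
    + (Γ 0 0 0 q * μ 0 q + Γ 0 0 1 q * μ 1 q), s, ?_, ?_⟩
  · have h1 := (s.μsm 0).pd hU 0
    have h2 := s.μsm
    have h3 := s.σsm
    have h4 := h.Γsm
    have h5 := h.Psm
    fun_prop
  · intro a b q hq
    have dΓ := h.diffΓ hq
    have dσ := s.diffσ hU hq
    have dμ := s.diffμ hU hq
    have hΓ0 := h.Γsym 0 1 0
    have hΓ1 := h.Γsym 1 1 0
    have hP := h.Psym 1 0
    have hσ := s.σsym 1 0
    have k00 := key 0 0 q hq
    have k01 := key 0 1 q hq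
    have k11 := key 1 1 q hq
    have g := fun c d => h.pd_Γ c d hq
    have g00 := g 0 0
    have g01 := g 0 1
    have g10 := g 1 0
    have g11 := g 1 1
    have e := fun a b c => s.pd_σ a b c hq
    simp (disch := fun_prop) only [pd_add, pd_sub, pd_neg, pd_mul, if_true, if_false,
      zero_ne_one, one_ne_zero, hσ, hP, hΓ0, hΓ1, e, zero_add, add_zero, zero_sub, sub_zero]
      at k00 k01 k11 g00 g01 g10 g11
    simp only [g00, g01, g10, g11] at k00 k01 k11
    fin_cases a <;> fin_cases b <;> simp [hP, hσ, hΓ0, hΓ1]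
    · ring
    · linear_combination (-1/2) * k11
    · linear_combination (1/2) * k00
    · linear_combination k01

/-- Closing the prolongation: `∇_a ρ = -2 P_{ac} μ^c + 2 Y_{acd} σ^{cd}`. -/
lemma ProlSol.pd_ρ (h : Geo U Γ ε P) (s : ProlSol U Γ P σ μ ρ) (a : Fin 2)
    {q : ℝ × ℝ} (hq : q ∈ U) :
    pd a ρ q = -2 * (P a 0 q * μ 0 q + P a 1 q * μ 1 q)
      + 2 * (Ytens Γ P a 0 0 q * σ 0 0 q + (Ytens Γ P a 0 1 q + Ytens Γ P a 1 0 q) * σ 0 1 q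
        + Ytens Γ P a 1 1 q * σ 1 1 q) := by
  have hU := h.hU
  have key : ∀ b : Fin 2, _ := fun b => pd_cross hU (s.μsm b)
    (fun p hp => s.pd_μ 0 b p hp) (fun p hp => s.pd_μ 1 b p hp) hq
  have dΓ := h.diffΓ hq
  have dP := h.diffP hq
  have dσ := s.diffσ hU hq
  have dμ := s.diffμ hU hq
  have dρ := s.ρsm.diffAt_open hU hq
  have hΓ0 := h.Γsym 0 1 0
  have hΓ1 := h.Γsym 1 1 0
  have hP := h.Psym 1 0
  have hσ := s.σsym 1 0
  have k0 := key 0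
  have k1 := key 1
  have g00 := h.pd_Γ 0 0 hq
  have g01 := h.pd_Γ 0 1 hq
  have g10 := h.pd_Γ 1 0 hq
  have g11 := h.pd_Γ 1 1 hq
  have e := fun a b c => s.pd_σ a b c hq
  have e' := fun a b => s.pd_μ a b q hq
  simp (disch := fun_prop) only [pd_add, pd_sub, pd_neg, pd_mul, if_true, if_false,
    zero_ne_one, one_ne_zero, hσ, hP, hΓ0, hΓ1, e, e', zero_add, add_zero, zero_sub, sub_zero]
    at k0 k1 g00 g01 g10 g11
  simp only [g00, g01, g10, g11] at k0 k1
  fin_cases a <;> simp only [Fin.zero_eta, Fin.mk_one, Fin.isValue, Ytens, covD2,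
    Fin.sum_univ_two, hP, hΓ0, hΓ1]
  · linear_combination -k1
  · linear_combination k0

/-! ### Smoothness and symmetry of the derived tensors -/

lemma Geo.covD1_sm (h : Geo U Γ ε P) {φ : Fin 2 → ℝ × ℝ → ℝ}
    (hφ : ∀ c, ContDiffOn ℝ (⊤ : ℕ∞) (φ c) U) (a c : Fin 2) :
    ContDiffOn ℝ (⊤ : ℕ∞) (covD1 Γ φ a c) U := by
  have hd := fun c => (hφ c).pd h.hU a
  have hΓ := h.Γsm
  unfold covD1
  simp only [Fin.sum_univ_two]
  fun_prop

lemma Geo.covD2_sm (h : Geo U Γ ε P) {φ : Fin 2 → Fin 2 → ℝ × ℝ → ℝ}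
    (hφ : ∀ b c, ContDiffOn ℝ (⊤ : ℕ∞) (φ b c) U) (a b c : Fin 2) :
    ContDiffOn ℝ (⊤ : ℕ∞) (covD2 Γ φ a b c) U := by
  have hd := fun b c => (hφ b c).pd h.hU a
  have hΓ := h.Γsm
  unfold covD2
  simp only [Fin.sum_univ_two]
  fun_prop

lemma Geo.Y_sm (h : Geo U Γ ε P) (c : Fin 2) :
    ContDiffOn ℝ (⊤ : ℕ∞) (Yform Γ ε P c) U := by
  have hd := h.covD2_sm h.Psm
  have hε := h.εsm
  unfold Yform
  simp only [Fin.sum_univ_two]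
  fun_prop

lemma Geo.DY_sm (h : Geo U Γ ε P) (a c : Fin 2) :
    ContDiffOn ℝ (⊤ : ℕ∞) (DY Γ ε P a c) U := h.covD1_sm h.Y_sm a c

lemma Geo.Z_sm (h : Geo U Γ ε P) (a b : Fin 2) :
    ContDiffOn ℝ (⊤ : ℕ∞) (Ztens Γ ε P a b) U := by
  have hd := h.covD1_sm h.Y_sm
  unfold Ztens
  fun_prop

lemma Geo.DZ_sm (h : Geo U Γ ε P) (a b c : Fin 2) :
    ContDiffOn ℝ (⊤ : ℕ∞) (DZ Γ ε P a b c) U := h.covD2_sm h.Z_sm a b c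

lemma Z_eq (a b : Fin 2) (q : ℝ × ℝ) :
    Ztens Γ ε P a b q = 1 / 2 * (DY Γ ε P a b q + DY Γ ε P b a q) := rfl

lemma Z_symm : Ztens Γ ε P 1 0 = Ztens Γ ε P 0 1 := by
  funext q; rw [Z_eq, Z_eq, add_comm]

lemma DZ_symm (a : Fin 2) : DZ Γ ε P a 1 0 = DZ Γ ε P a 0 1 := by
  funext q
  simp only [DZ, covD2, Z_symm, Fin.sum_univ_two]
  ring

lemma pd_Y (a c : Fin 2) (q : ℝ × ℝ) : pd a (Yform Γ ε P c) q = DY Γ ε P a c q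
    + (Γ 0 a c q * Yform Γ ε P 0 q + Γ 1 a c q * Yform Γ ε P 1 q) := by
  simp only [DY, covD1, Fin.sum_univ_two]; ring

lemma pd_Z (a b c : Fin 2) (q : ℝ × ℝ) : pd a (Ztens Γ ε P b c) q = DZ Γ ε P a b c q
    + (Γ 0 a b q * Ztens Γ ε P 0 c q + Γ 1 a b q * Ztens Γ ε P 1 c q)
    + (Γ 0 a c q * Ztens Γ ε P b 0 q + Γ 1 a c q * Ztens Γ ε P b 1 q) := by
  simp only [DZ, covD2, Fin.sum_univ_two]; ring

/-- `Y_c = 2 ε⁰¹ Y_{01c}`. -/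
lemma Geo.Y_eq (h : Geo U Γ ε P) (c : Fin 2) (q : ℝ × ℝ) :
    Yform Γ ε P c q = ε 0 1 q * (2 * Ytens Γ P 0 1 c q) := by
  have h00 : ε 0 0 q = 0 := by linarith [h.εskew 0 0 q]
  have h11 : ε 1 1 q = 0 := by linarith [h.εskew 1 1 q]
  simp only [Yform, Ytens, Fin.sum_univ_two, h00, h11, h.εskew 1 0 q]
  ring

/-! ### The constraint and its derivatives -/

/-- The mixed second derivatives of `ρ` agree, which gives the algebraic constraint
`5 Y_c μ^c + Z_{cd} σ^{cd} = 0`. -/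
lemma ProlSol.constraint (h : Geo U Γ ε P) (s : ProlSol U Γ P σ μ ρ) {q : ℝ × ℝ} (hq : q ∈ U) :
    5 * (Yform Γ ε P 0 q * μ 0 q + Yform Γ ε P 1 q * μ 1 q) + (Ztens Γ ε P 0 0 q * σ 0 0 q
      + 2 * Ztens Γ ε P 0 1 q * σ 0 1 q + Ztens Γ ε P 1 1 q * σ 1 1 q) = 0 := by
  have hU := h.hU
  have hYt : ∀ a c p, Ytens Γ P a a c p = 0 := fun a c p => by simp [Ytens]
  have hYt' : ∀ c p, Ytens Γ P 1 0 c p = -Ytens Γ P 0 1 c p := fun c p => by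
    simp only [Ytens]; ring
  -- multiplying by `ε⁰¹` clears the denominator in `Y_{01c} = Y_c / (2 ε⁰¹)`
  have e0 : ∀ p ∈ U, ε 0 1 p * pd 0 ρ p = -2 * (ε 0 1 p * (P 0 0 p * μ 0 p + P 0 1 p * μ 1 p))
      + (Yform Γ ε P 0 p * σ 0 1 p + Yform Γ ε P 1 p * σ 1 1 p) := fun p hp => by
    rw [s.pd_ρ h 0 hp, h.Y_eq, h.Y_eq]
    simp only [hYt]; ring
  have e1 : ∀ p ∈ U, ε 0 1 p * pd 1 ρ p = -2 * (ε 0 1 p * (P 0 1 p * μ 0 p + P 1 1 p * μ 1 p))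
      - (Yform Γ ε P 0 p * σ 0 0 p + Yform Γ ε P 1 p * σ 0 1 p) := fun p hp => by
    rw [s.pd_ρ h 1 hp, h.Y_eq, h.Y_eq, h.Psym 1 0]
    simp only [hYt, hYt']; ring
  have dΓ := h.diffΓ hq
  have dP := h.diffP hq
  have dε := h.diffε hq
  have dσ := s.diffσ hU hq
  have dμ := s.diffμ hU hq
  have dρ := fun a => (s.ρsm.pd hU a).diffAt_open hU hq
  have dY := fun c => (h.Y_sm c).diffAt_open hU hq
  have hΓ0 := h.Γsym 0 1 0
  have hΓ1 := h.Γsym 1 1 0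
  have hP := h.Psym 1 0
  have hσ := s.σsym 1 0
  have k0 := pd_congr hU e0 1 hq (by fun_prop)
  have k1 := pd_congr hU e1 0 hq (by fun_prop)
  have e := fun a b c => s.pd_σ a b c hq
  have e' := fun a b => s.pd_μ a b q hq
  have eε := fun a => h.pd_ε a hq
  have y0 := h.Y_eq 0 q
  have y1 := h.Y_eq 1 q
  have hρ0 := e0 q hq
  have hρ1 := e1 q hq
  have hc := pd_comm hU s.ρsm hq
  simp only [Ytens, covD2, Fin.sum_univ_two, hP, hΓ0, hΓ1] at y0 y1
  simp (disch := fun_prop) only [pd_add, pd_sub, pd_neg, pd_mul, pd_const, if_true, if_false,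
    zero_ne_one, one_ne_zero, hσ, hP, hΓ0, hΓ1, e, e', eε, pd_Y, zero_add, add_zero, zero_sub]
    at k0 k1
  simp only [Z_eq]
  linear_combination k1 - k0 - ε 0 1 q * hc + (2 * μ 0 q) * y0 + 2 * μ 1 q * y1
    - (Γ 0 0 1 q + Γ 1 1 1 q) * hρ0 + (Γ 0 0 0 q + Γ 1 0 1 q) * hρ1

/-- The covariant derivative of the constraint, `5 Y_a ρ + S_{ca} μ^c + V_{cda} σ^{cd} = 0`. -/
lemma ProlSol.constraint_pd (h : Geo U Γ ε P) (s : ProlSol U Γ P σ μ ρ) (a : Fin 2)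
    {q : ℝ × ℝ} (hq : q ∈ U) :
    5 * Yform Γ ε P a q * ρ q + (Stens Γ ε P 0 a q * μ 0 q + Stens Γ ε P 1 a q * μ 1 q)
      + (Vtens Γ ε P 0 0 a q * σ 0 0 q + 2 * Vtens Γ ε P 0 1 a q * σ 0 1 q
        + Vtens Γ ε P 1 1 a q * σ 1 1 q) = 0 := by
  have hU := h.hU
  have dσ := s.diffσ hU hq
  have dμ := s.diffμ hU hq
  have dY := fun c => (h.Y_sm c).diffAt_open hU hq
  have dZ := fun c d => (h.Z_sm c d).diffAt_open hU hq
  have hΓ0 := h.Γsym 0 1 0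
  have hΓ1 := h.Γsym 1 1 0
  have hP := h.Psym 1 0
  have hσ := s.σsym 1 0
  have k := pd_congr hU (fun p hp => s.constraint h hp) a hq (by fun_prop)
  have e := fun a b c => s.pd_σ a b c hq
  have e' := fun a b => s.pd_μ a b q hq
  simp (disch := fun_prop) only [pd_add, pd_mul, pd_const, e, e', pd_Y, pd_Z, hσ,
    Z_symm] at k
  fin_cases a <;>
  · simp only [Fin.zero_eta, Fin.mk_one, Fin.isValue, Stens, Vtens, hP, hΓ0, hΓ1, if_true,
      if_false, zero_ne_one, one_ne_zero, Z_symm] at k ⊢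
    linear_combination k

/-- The symmetrised second covariant derivative of the constraint,
`12 Z_{ab} ρ + T_{cab} μ^c + X_{cdab} σ^{cd} = 0`. -/
lemma ProlSol.constraint_pd_pd (h : Geo U Γ ε P) (s : ProlSol U Γ P σ μ ρ) (a b : Fin 2)
    {q : ℝ × ℝ} (hq : q ∈ U) :
    12 * Ztens Γ ε P a b q * ρ q + (Ttens Γ ε P 0 a b q * μ 0 q + Ttens Γ ε P 1 a b q * μ 1 q)
      + (Xtens Γ ε P 0 0 a b q * σ 0 0 q + 2 * Xtens Γ ε P 0 1 a b q * σ 0 1 q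
        + Xtens Γ ε P 1 1 a b q * σ 1 1 q) = 0 := by
  have hU := h.hU
  have dP := h.diffP hq
  have dσ := s.diffσ hU hq
  have dμ := s.diffμ hU hq
  have dρ := s.ρsm.diffAt_open hU hq
  have dY := fun c => (h.Y_sm c).diffAt_open hU hq
  have dZ := fun c d => (h.Z_sm c d).diffAt_open hU hq
  have dDY := fun c d => (h.DY_sm c d).diffAt_open hU hq
  have dDZ := fun b c d => (h.DZ_sm b c d).diffAt_open hU hq
  have hΓ0 := h.Γsym 0 1 0
  have hΓ1 := h.Γsym 1 1 0
  have hP := h.Psym 1 0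
  have hσ := s.σsym 1 0
  have K := fun a => s.constraint_pd h a hq
  have k : ∀ a b : Fin 2, _ := fun a b =>
    pd_congr hU (fun p hp => s.constraint_pd h a hp) b hq
      (by unfold Stens Vtens; fun_prop)
  have e := fun a b c => s.pd_σ a b c hq
  have e' := fun a b => s.pd_μ a b q hq
  have e'' := fun a => s.pd_ρ h a hq
  simp (disch := fun_prop) only [Stens, Vtens, pd_add, pd_sub, pd_mul, pd_const, e, e', e'',
    pd_Y, pd_Z, hσ] at k
  have K0 := K 0
  have K1 := K 1
  have k00 := k 0 0
  have k01 := k 0 1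
  have k10 := k 1 0
  have k11 := k 1 1
  simp only [Stens, Vtens, hP, hΓ0, hΓ1, if_true, if_false, zero_ne_one, one_ne_zero, Z_symm,
    DZ_symm] at K0 K1 k00 k01 k10 k11
  have z := fun a b => Z_eq (Γ := Γ) (ε := ε) (P := P) a b q
  -- `∇_{(b}K_{a)}` for the first-order constraint `K`: the symmetrised partial derivative minus
  -- the Christoffel term
  fin_cases a <;> fin_cases b <;>
    simp only [Fin.zero_eta, Fin.mk_one, Fin.isValue, Ttens, Xtens, DDY, DDZ, covD2, covD3,
      Fin.sum_univ_two, hP, hΓ0, hΓ1, Z_symm, DZ_symm]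
  · linear_combination k00 - Γ 0 0 0 q * K0 - Γ 1 0 0 q * K1 + 10 * ρ q * z 0 0
  · linear_combination (1/2) * k01 + (1/2) * k10 - Γ 0 0 1 q * K0 - Γ 1 0 1 q * K1
      + 10 * ρ q * z 0 1
  · linear_combination (1/2) * k01 + (1/2) * k10 - Γ 0 0 1 q * K0 - Γ 1 0 1 q * K1
      + 10 * ρ q * z 0 1
  · linear_combination k11 - Γ 0 1 1 q * K0 - Γ 1 1 1 q * K1 + 10 * ρ q * z 1 1

end Prolongation

/-- **Tractor form of the metrisability obstruction.** If `∇` is projectively equivalent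
to a Levi–Civita connection, then the determinant `D(Γ)` of the tractor matrix vanishes
identically on `U`. -/
theorem tractor_obstruction (U : Set (ℝ × ℝ)) (hU : IsOpen U)
    (Γ : Fin 2 → Fin 2 → Fin 2 → ℝ × ℝ → ℝ)
    (hΓsym : ∀ c a b, Γ c a b = Γ c b a)
    (hΓsm : ∀ c a b, ContDiffOn ℝ (⊤ : ℕ∞) (Γ c a b) U)
    (ε : Fin 2 → Fin 2 → ℝ × ℝ → ℝ)
    (hεskew : ∀ a b q, ε a b q = -ε b a q)
    (hεne : ∀ q ∈ U, ε 0 1 q ≠ 0)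
    (hεsm : ∀ a b, ContDiffOn ℝ (⊤ : ℕ∞) (ε a b) U)
    (hεpar : ∀ a b c : Fin 2, ∀ q ∈ U,
      pd a (ε b c) q + (∑ e : Fin 2, Γ b a e q * ε e c q)
        + (∑ e : Fin 2, Γ c a e q * ε b e q) = 0)
    (P : Fin 2 → Fin 2 → ℝ × ℝ → ℝ)
    (hPsym : ∀ a b, P a b = P b a)
    (hPsm : ∀ a b, ContDiffOn ℝ (⊤ : ℕ∞) (P a b) U)
    (hSchouten : ∀ c a b d : Fin 2, ∀ q ∈ U,
      Rcurv Γ c a b d q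
        = (if c = a then P b d q else 0) - (if c = b then P a d q else 0))
    (hmet : ProjEquivLeviCivita U Γ) :
    ∀ q ∈ U, (TractorMat Γ ε P q).det = 0 := by
  have h : Geo U Γ ε P :=
    ⟨hU, hΓsym, hΓsm, hεskew, hεne, hεsm, hεpar, hPsym, hPsm, hSchouten⟩
  intro q hq
  obtain ⟨σ, μ, s, hdet⟩ := exists_metrSol h hmet
  obtain ⟨ρ, s⟩ := exists_prolSol h s
  rw [← Matrix.exists_vecMul_eq_zero_iff]
  -- rows 4–6 carry one representative of each symmetric pair, so `σ⁰¹` enters twice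
  refine ⟨![ρ q, μ 0 q, μ 1 q, σ 0 0 q, 2 * σ 0 1 q, σ 1 1 q], ?_, ?_⟩
  · intro h0
    have h3 : σ 0 0 q = 0 := congrFun h0 3
    have h4 : 2 * σ 0 1 q = 0 := congrFun h0 4
    have h4' : σ 0 1 q = 0 := by linarith
    exact hdet q hq (by rw [h3, h4']; ring)
  · have c := s.constraint h hq
    have c0 := s.constraint_pd h 0 hq
    have c1 := s.constraint_pd h 1 hq
    have c00 := s.constraint_pd_pd h 0 0 hq
    have c01 := s.constraint_pd_pd h 0 1 hq
    have c11 := s.constraint_pd_pd h 1 1 hq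
    funext i
    fin_cases i <;> simp [TractorMat, Matrix.vecMul, dotProduct, Fin.sum_univ_six]
    · linear_combination c
    · linear_combination c0
    · linear_combination c1
    · linear_combination c00
    · linear_combination c01
    · linear_combination c11
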